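/- The Masser–Oesterlé abc Conjecture implies the Small Derivatives Conjecture: suppose that for every ε > 0 there is a constant κ_ε > 0 such that all coprime positive integers a, b, c with a + b = c satisfy c < κ_ε · rad(abc)^{1+ε}. Then there exists a constant 0 < η < 1 such that for all but finitely many triples of coprime positive integers (a,b,c) satisfying a + b = c and not, up to order, of the form (1, N, q) with q prime, there exists ψ ∈ 𝒯(a,b) such that a, b are ψ-independent and ‖ψ‖ < c^η. -/

import Mathlib

open Finset

/-- The arithmetic derivative attached to `ψ`: `d^ψ(n) = Σ_{p ∣ n} (n·v_p(n)/p)·ψ(p)`,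
with `d^ψ(0) = 0` (empty sum). Each term is written as `(n/p)·v_p(n)·ψ(p)`, exact since `p ∣ n`. -/
def dpsi (ψ : ℕ → ℤ) (n : ℤ) : ℤ :=
  ∑ p ∈ n.natAbs.primeFactors, (n / (p : ℤ)) * (n.natAbs.factorization p : ℤ) * ψ p

/-- A derivation: a function on primes (zero off primes) with finite norm. -/
def IsDeriv (ψ : ℕ → ℤ) : Prop :=
  (∀ p : ℕ, ¬ p.Prime → ψ p = 0) ∧ ∃ B : ℤ, ∀ p : ℕ, |ψ p| ≤ B

/-- The norm `‖ψ‖ = sup_p |ψ(p)|`. -/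
noncomputable def dNorm (ψ : ℕ → ℤ) : ℝ := ⨆ p : ℕ, (|ψ p| : ℝ)

/-- Membership in `𝒯(a,b)`: a derivation supported on the primes dividing `ab(a+b)`
satisfying `d^ψ(a+b) = d^ψ(a) + d^ψ(b)`. -/
def MemT (a b : ℕ) (ψ : ℕ → ℤ) : Prop :=
  IsDeriv ψ ∧ (∀ p : ℕ, p.Prime → ¬ p ∣ (a * b * (a + b)) → ψ p = 0) ∧
    dpsi ψ ((a : ℤ) + (b : ℤ)) = dpsi ψ (a : ℤ) + dpsi ψ (b : ℤ)

/-- The `ψ`-Wronskian `W^ψ(a,b) = a·d^ψ(b) − b·d^ψ(a)`. -/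
def Wpsi (ψ : ℕ → ℤ) (a b : ℤ) : ℤ := a * dpsi ψ b - b * dpsi ψ a

/-- Membership in `𝒯°(a,b)`: elements of `𝒯(a,b)` for which `a, b` are `ψ`-dependent. -/
def MemT0 (a b : ℕ) (ψ : ℕ → ℤ) : Prop := MemT a b ψ ∧ Wpsi ψ (a : ℤ) (b : ℤ) = 0

/-- The radical of `n`: product of the distinct primes dividing `n`. -/
def radN (n : ℕ) : ℕ := ∏ p ∈ n.primeFactors, p

/-- The Small Derivatives Conjecture with exponent `η`: for all but finitely many triples of
coprime positive integers `(a,b,c)` with `a+b=c`, not of the form `(1,N,q)` with `q` prime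
up to order, there is `ψ ∈ 𝒯(a,b)` with `a,b` `ψ`-independent and `‖ψ‖ < c^η`. -/
def SDC (η : ℝ) : Prop :=
  {t : ℕ × ℕ × ℕ | 0 < t.1 ∧ 0 < t.2.1 ∧ t.1 + t.2.1 = t.2.2 ∧ Nat.Coprime t.1 t.2.1 ∧
    ¬ (∃ N q : ℕ, q.Prime ∧ ({t.1, t.2.1, t.2.2} : Multiset ℕ) = {1, N, q}) ∧
    ¬ ∃ ψ : ℕ → ℤ, MemT t.1 t.2.1 ψ ∧ Wpsi ψ (t.1 : ℤ) (t.2.1 : ℤ) ≠ 0 ∧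
      dNorm ψ < (t.2.2 : ℝ) ^ η}.Finite

section SDCproof

def cf (n p : ℕ) : ℤ := ((n : ℤ) / (p : ℤ)) * (n.factorization p : ℤ)

lemma cf_mul {n p : ℕ} (h : p ∣ n) : cf n p * p = n * n.factorization p := by
  unfold cf
  have : ((n : ℤ) / (p : ℤ)) * p = n := Int.ediv_mul_cancel (by exact_mod_cast h)
  linear_combination (n.factorization p : ℤ) * this

lemma cf_zero {n p : ℕ} (h : ¬ p ∣ n) : cf n p = 0 := by
  unfold cf
  rw [Nat.factorization_eq_zero_of_not_dvd h]; simp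

lemma cf_pos {n p : ℕ} (hn : 0 < n) (hp : p.Prime) (h : p ∣ n) : 0 < cf n p := by
  unfold cf
  have h1 : 0 < n.factorization p := hp.factorization_pos_of_dvd hn.ne' h
  have h2 : 0 < n / p := Nat.div_pos (Nat.le_of_dvd hn h) hp.pos
  have h3 : (0:ℤ) < (n : ℤ) / (p : ℤ) := by exact_mod_cast h2
  positivity

lemma dpsi_add (ψ φ : ℕ → ℤ) (n : ℤ) : dpsi (ψ + φ) n = dpsi ψ n + dpsi φ n := by
  unfold dpsi
  rw [← Finset.sum_add_distrib]
  apply Finset.sum_congr rfl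
  intros; simp; ring

lemma dpsi_sum {ι : Type*} (S : Finset ι) (ψ : ι → ℕ → ℤ) (n : ℤ) :
    dpsi (∑ i ∈ S, ψ i) n = ∑ i ∈ S, dpsi (ψ i) n := by
  classical
  induction S using Finset.induction_on with
  | empty => simp [dpsi]
  | insert a s ha ih => rw [Finset.sum_insert ha, Finset.sum_insert ha, dpsi_add, ih]

lemma dpsi_single {n p : ℕ} (hn : 0 < n) (hp : p.Prime) (x : ℤ) :
    dpsi (Pi.single p x) (n : ℤ) = cf n p * x := by
  unfold dpsi cf
  by_cases h : p ∣ n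
  · rw [Finset.sum_eq_single p]
    · simp
    · intro b _ hb; simp [Pi.single_apply, hb]
    · intro h'; simp [hp, h, hn.ne'] at h'
  · rw [Nat.factorization_eq_zero_of_not_dvd h]
    rw [Finset.sum_eq_zero]
    · simp
    · intro q hq
      have : q ≠ p := by rintro rfl; simp at hq; exact h hq.2.1
      simp [Pi.single_apply, this]

structure Hyp (e1 e2 e3 : ℤ) (n1 n2 n3 : ℕ) (L : ℝ) : Prop where
  p1 : 0 < n1
  p2 : 0 < n2
  p3 : 0 < n3
  c12 : Nat.Coprime n1 n2
  c13 : Nat.Coprime n1 n3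
  c23 : Nat.Coprime n2 n3
  s1 : e1 * e1 = 1
  s2 : e2 * e2 = 1
  s3 : e3 * e3 = 1
  sum : e1 * n1 + e2 * n2 + e3 * n3 = 0
  b1 : (n1 : ℝ) ≤ L ^ 100
  b2 : (n2 : ℝ) ≤ L ^ 100
  b3 : (n3 : ℝ) ≤ L ^ 100
  big : ((Nat.factorial 20 : ℕ) : ℝ) ≤ L
  hlog : ∀ k : ℕ, (2:ℝ) ^ k ≤ L ^ 100 → (k : ℝ) ≤ L
  hrad : L ^ 80 ≤ (radN n1 : ℝ) * radN n2 * radN n3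
  hm : ∀ N q : ℕ, q.Prime → ({n1, n2, n3} : Multiset ℕ) ≠ {1, N, q}

def Good (e1 e2 e3 : ℤ) (n1 n2 n3 : ℕ) (L : ℝ) : Prop :=
  ∃ ψ : ℕ → ℤ, (∀ p, ¬ p.Prime → ψ p = 0) ∧
    (∀ p, p.Prime → ¬ p ∣ n1 → ¬ p ∣ n2 → ¬ p ∣ n3 → ψ p = 0) ∧
    e1 * dpsi ψ n1 + e2 * dpsi ψ n2 + e3 * dpsi ψ n3 = 0 ∧
    ¬ ((n1 : ℤ) * dpsi ψ n2 = n2 * dpsi ψ n1 ∧ (n1 : ℤ) * dpsi ψ n3 = n3 * dpsi ψ n1 ∧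
      (n2 : ℤ) * dpsi ψ n3 = n3 * dpsi ψ n2) ∧
    ∀ p, |(ψ p : ℝ)| ≤ L ^ 98

variable {e1 e2 e3 : ℤ} {n1 n2 n3 : ℕ} {L : ℝ}

lemma Hyp.swap12 (h : Hyp e1 e2 e3 n1 n2 n3 L) : Hyp e2 e1 e3 n2 n1 n3 L :=
  ⟨h.p2, h.p1, h.p3, h.c12.symm, h.c23, h.c13, h.s2, h.s1, h.s3, by linarith [h.sum],
    h.b2, h.b1, h.b3, h.big, h.hlog, by rw [mul_comm (radN n2 : ℝ)]; exact h.hrad, by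
      intro N q hq hh
      apply h.hm N q hq
      rw [← hh]; exact Multiset.cons_swap _ _ _⟩

lemma Hyp.swap23 (h : Hyp e1 e2 e3 n1 n2 n3 L) : Hyp e1 e3 e2 n1 n3 n2 L :=
  ⟨h.p1, h.p3, h.p2, h.c13, h.c12, h.c23.symm, h.s1, h.s3, h.s2, by linarith [h.sum],
    h.b1, h.b3, h.b2, h.big, h.hlog, by rw [mul_right_comm]; exact h.hrad, by
      intro N q hq hh
      apply h.hm N q hq
      rw [← hh]; congr 1; exact Multiset.cons_swap _ _ _⟩

lemma Good.swap12 (h : Good e1 e2 e3 n1 n2 n3 L) : Good e2 e1 e3 n2 n1 n3 L := by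
  obtain ⟨ψ, h1, h2, h3, h4, h5⟩ := h
  refine ⟨ψ, h1, fun p hp a b c => h2 p hp b a c, by linarith, ?_, h5⟩
  rintro ⟨a, b, c⟩
  exact h4 ⟨a.symm, c, b⟩

lemma Good.swap23 (h : Good e1 e2 e3 n1 n2 n3 L) : Good e1 e3 e2 n1 n3 n2 L := by
  obtain ⟨ψ, h1, h2, h3, h4, h5⟩ := h
  refine ⟨ψ, h1, fun p hp a b c => h2 p hp a c b, by linarith, ?_, h5⟩
  rintro ⟨a, b, c⟩
  exact h4 ⟨b, a, c.symm⟩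

lemma Hyp.L_big (h : Hyp e1 e2 e3 n1 n2 n3 L) : 1000 ≤ L :=
  le_trans (by norm_num [Nat.factorial]) h.big

lemma abs_sign {e : ℤ} (h : e * e = 1) : |(e : ℝ)| = 1 := by
  rcases mul_self_eq_one_iff.mp h with rfl | rfl <;> simp

/-- valuation bound -/
lemma Hyp.val (h : Hyp e1 e2 e3 n1 n2 n3 L) {n p : ℕ} (hn : 0 < n) (hb : (n:ℝ) ≤ L ^ 100)
    (hp : p.Prime) : (n.factorization p : ℝ) ≤ L := by
  apply h.hlog
  refine le_trans ?_ hb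
  have h1 : p ^ n.factorization p ≤ n := Nat.ordProj_le p hn.ne'
  have h2 : 2 ^ n.factorization p ≤ p ^ n.factorization p := Nat.pow_le_pow_left hp.two_le _
  exact_mod_cast h2.trans h1

lemma Hyp.cf_le (h : Hyp e1 e2 e3 n1 n2 n3 L) {n p : ℕ} (hn : 0 < n) (hb : (n:ℝ) ≤ L ^ 100)
    (hp : p.Prime) (hd : p ∣ n) : (cf n p : ℝ) * p ≤ L ^ 101 := by
  have h1 : (cf n p : ℝ) * p = n * n.factorization p := by exact_mod_cast cf_mul hd
  rw [h1, pow_succ]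
  have := h.val hn hb hp
  have := h.L_big
  gcongr

lemma Hyp.cf_le' (h : Hyp e1 e2 e3 n1 n2 n3 L) {n p : ℕ} (hn : 0 < n) (hb : (n:ℝ) ≤ L ^ 100)
    (hp : p.Prime) (hd : p ∣ n) : (cf n p : ℝ) ≤ L ^ 101 := by
  refine le_trans ?_ (h.cf_le hn hb hp hd)
  have h1 : (0:ℝ) < cf n p := by exact_mod_cast cf_pos hn hp hd
  have h2 : (1:ℝ) ≤ p := by exact_mod_cast hp.one_lt.le
  nlinarith

lemma pigeon (A B C X Z : ℕ) (hC : 0 < C) (hZ : 0 < Z) (h1 : 2 * (A + B) ≤ X * Z)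
    (h2 : 2 * C ≤ X * X) : ∃ x y z : ℤ, ¬ (x = 0 ∧ y = 0) ∧ |x| ≤ X ∧ |y| ≤ X ∧ |z| < Z ∧
      (A : ℤ) * x + B * y = C * z := by
  classical
  let S := Finset.range (X + 1) ×ˢ Finset.range (X + 1)
  let T := Finset.range C ×ˢ Finset.range (X * (A + B) / (C * Z) + 1)
  let f : ℕ × ℕ → ℕ := fun t => A * t.1 + B * t.2
  have hCZ : 0 < C * Z := Nat.mul_pos hC hZ
  have hcard : T.card < S.card := by
    simp only [S, T, Finset.card_product, Finset.card_range]
    have h3 : C * (X * (A + B) / (C * Z)) * Z ≤ X * (A + B) := by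
      calc _ = (X * (A + B) / (C * Z)) * (C * Z) := by ring
        _ ≤ _ := Nat.div_mul_le_self _ _
    have h4 : 2 * (C * (X * (A + B) / (C * Z))) ≤ X * X := by
      by_contra hcon
      push Not at hcon
      have : X * X * Z < 2 * (C * (X * (A + B) / (C * Z))) * Z := Nat.mul_lt_mul_of_pos_right hcon hZ
      nlinarith
    nlinarith
  have hmaps : ∀ t ∈ S, ((f t % C, f t / (C * Z)) : ℕ × ℕ) ∈ T := by
    intro t ht
    simp only [S, T, Finset.mem_product, Finset.mem_range] at ht ⊢
    refine ⟨Nat.mod_lt _ hC, Nat.lt_succ_of_le (Nat.div_le_div_right ?_)⟩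
    simp only [f]
    nlinarith [Nat.mul_le_mul_left A (Nat.lt_succ_iff.mp ht.1), Nat.mul_le_mul_left B (Nat.lt_succ_iff.mp ht.2)]
  obtain ⟨s, hs, t, ht, hst, heq⟩ := Finset.exists_ne_map_eq_of_card_lt_of_maps_to hcard hmaps
  simp only [Prod.mk.injEq] at heq
  simp only [S, Finset.mem_product, Finset.mem_range] at hs ht
  have hdvd : (C : ℤ) ∣ (f s : ℤ) - f t := (Nat.modEq_iff_dvd.mp (show f t ≡ f s [MOD C] from heq.1.symm))
  obtain ⟨z, hz⟩ := hdvd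
  have hclose : |(f s : ℤ) - f t| < C * Z := by
    have a1 := Nat.div_add_mod (f s) (C * Z)
    have a2 := Nat.div_add_mod (f t) (C * Z)
    rw [heq.2] at a1
    have b1 := Nat.mod_lt (f s) hCZ
    have b2 := Nat.mod_lt (f t) hCZ
    rw [abs_lt]
    have : ((C : ℤ) * Z) = ((C * Z : ℕ) : ℤ) := by push_cast; ring
    rw [this]
    generalize C * Z * (f t / (C * Z)) = w at *
    constructor <;> omega
  refine ⟨(s.1 : ℤ) - t.1, (s.2 : ℤ) - t.2, z, ?_, ?_, ?_, ?_, ?_⟩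
  · rintro ⟨u, v⟩
    apply hst
    ext <;> omega
  · rw [abs_le]; constructor <;> omega
  · rw [abs_le]; constructor <;> omega
  · rw [hz, abs_mul, Nat.abs_cast] at hclose
    exact lt_of_mul_lt_mul_left hclose (by positivity)
  · rw [← hz]; simp only [f]; push_cast; ring

lemma Hyp.pig (h : Hyp e1 e2 e3 n1 n2 n3 L) {A B C : ℤ} {v s : ℕ} (hA : 0 < A) (hB : 0 < B)
    (hC : 0 < C)
    (hA' : (A : ℝ) ≤ L ^ 101) (hB' : (B : ℝ) ≤ L ^ 101) (hC' : (C : ℝ) ≤ L ^ 101)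
    (hv : (v : ℝ) ≤ L) (hs : L ^ 5 ≤ s) :
    ∃ x y z : ℤ, ¬ (x = 0 ∧ y = 0) ∧ |(x:ℝ)| ≤ L ^ 98 ∧ |(y:ℝ)| ≤ L ^ 98 ∧ |(z:ℝ)| ≤ L ^ 98 ∧
      |z| * v < s ∧ A * x + B * y = C * z := by
  have hL := h.L_big
  have hL0 : (0:ℝ) < L := by linarith
  lift A to ℕ using hA.le
  lift B to ℕ using hB.le
  lift C to ℕ using hC.le
  simp only [Int.cast_natCast] at hA' hB' hC'
  obtain ⟨X, hX⟩ : ∃ X, X = ⌊L ^ 98⌋₊ := ⟨_, rfl⟩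
  obtain ⟨Z, hZ⟩ : ∃ Z, Z = ⌊L ^ 4⌋₊ := ⟨_, rfl⟩
  have X1 : (X : ℝ) ≤ L ^ 98 := hX ▸ Nat.floor_le (by positivity)
  have Z1 : (Z : ℝ) ≤ L ^ 4 := hZ ▸ Nat.floor_le (by positivity)
  have one98 : (1:ℝ) ≤ L ^ 97 := one_le_pow₀ (by linarith)
  have one3 : (1:ℝ) ≤ L ^ 3 := one_le_pow₀ (by linarith)
  have X2 : L ^ 98 / 2 ≤ X := by
    have := Nat.lt_floor_add_one (L ^ 98)
    rw [← hX] at this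
    nlinarith
  have Z2 : L ^ 4 / 2 ≤ Z := by
    have := Nat.lt_floor_add_one (L ^ 4)
    rw [← hZ] at this
    nlinarith
  have Zpos : 0 < Z := by
    have : (0:ℝ) < Z := lt_of_lt_of_le (by positivity) Z2
    exact_mod_cast this
  have p101 : (0:ℝ) < L ^ 101 := by positivity
  obtain ⟨x, y, z, h1, h2, h3, h4, h5⟩ := pigeon A B C X Z (by exact_mod_cast hC) Zpos
    (by
      have : (2:ℝ) * (A + B) ≤ X * Z := by
        calc (2:ℝ) * (A + B) ≤ 4 * L ^ 101 := by linarith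
          _ ≤ (L ^ 98 / 2) * (L ^ 4 / 2) := by
            have : (L ^ 98 / 2) * (L ^ 4 / 2) = L ^ 101 * (L / 4) := by ring
            nlinarith
          _ ≤ X * Z := by gcongr
      exact_mod_cast this)
    (by
      have : (2:ℝ) * C ≤ X * X := by
        calc (2:ℝ) * C ≤ 2 * L ^ 101 := by linarith
          _ ≤ (L ^ 98 / 2) * (L ^ 98 / 2) := by
            have e : (L ^ 98 / 2) * (L ^ 98 / 2) = L ^ 101 * (L ^ 95 / 4) := by ring
            have : L ^ 1 ≤ L ^ 95 := pow_le_pow_right₀ (by linarith) (by norm_num)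
            nlinarith
          _ ≤ X * X := by gcongr
      exact_mod_cast this)
  have h2' : |(x:ℝ)| ≤ X := by exact_mod_cast h2
  have h3' : |(y:ℝ)| ≤ X := by exact_mod_cast h3
  have h4' : |(z:ℝ)| < Z := by exact_mod_cast h4
  refine ⟨x, y, z, h1, h2'.trans X1, h3'.trans X1, ?_, ?_, h5⟩
  · exact (h4'.le.trans Z1).trans (pow_le_pow_right₀ (by linarith) (by norm_num))
  · have : |(z:ℝ)| * v < s := by
      have hLv : |(z:ℝ)| * v ≤ |(z:ℝ)| * L := by gcongr
      have : |(z:ℝ)| * L < L ^ 4 * L := by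
        have := h4'.trans_le Z1
        gcongr
      have e : L ^ 4 * L = L ^ 5 := by ring
      linarith
    exact_mod_cast this

def psi3 (p q s : ℕ) (x y z : ℤ) : ℕ → ℤ := Pi.single p x + Pi.single q y + Pi.single s z

lemma psi3_apply (p q s : ℕ) (x y z : ℤ) (r : ℕ) : psi3 p q s x y z r =
    (if r = p then x else 0) + (if r = q then y else 0) + (if r = s then z else 0) := by
  simp [psi3, Pi.single_apply]

lemma dpsi_psi3 {n p q s : ℕ} (hn : 0 < n) (hp : p.Prime) (hq : q.Prime) (hs : s.Prime)
    (x y z : ℤ) : dpsi (psi3 p q s x y z) n = cf n p * x + cf n q * y + cf n s * z := by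
  unfold psi3
  rw [dpsi_add, dpsi_add, dpsi_single hn hp, dpsi_single hn hq, dpsi_single hn hs]

lemma psi3_bound {p q s : ℕ} (hpq : p ≠ q) (hps : p ≠ s) (hqs : q ≠ s) {x y z : ℤ} {X : ℝ}
    (h0 : 0 ≤ X) (hx : |(x:ℝ)| ≤ X) (hy : |(y:ℝ)| ≤ X) (hz : |(z:ℝ)| ≤ X) (r : ℕ) :
    |(psi3 p q s x y z r : ℝ)| ≤ X := by
  rw [psi3_apply]
  by_cases h1 : r = p
  · subst h1; simpa [hpq, hps] using hx
  by_cases h2 : r = q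
  · subst h2; simpa [h1, hqs] using hy
  by_cases h3 : r = s
  · subst h3; simpa [h1, h2] using hz
  simpa [h1, h2, h3] using h0

lemma ndvd {n m p : ℕ} (h : Nat.Coprime n m) (hp : p.Prime) (h1 : p ∣ n) : ¬ p ∣ m := fun h2 =>
  Nat.Prime.one_lt hp |>.ne' (Nat.eq_one_of_dvd_coprimes h h1 h2)

lemma good3 {p q s : ℕ} (hp : p.Prime) (hq : q.Prime) (hs : s.Prime)
    (hpd : p ∣ n1 ∨ p ∣ n2 ∨ p ∣ n3) (hqd : q ∣ n1 ∨ q ∣ n2 ∨ q ∣ n3)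
    (hsd : s ∣ n1 ∨ s ∣ n2 ∨ s ∣ n3)
    (hpq : p ≠ q) (hps : p ≠ s) (hqs : q ≠ s) {x y z : ℤ} (hL : 0 ≤ L)
    (hx : |(x:ℝ)| ≤ L ^ 98) (hy : |(y:ℝ)| ≤ L ^ 98) (hz : |(z:ℝ)| ≤ L ^ 98)
    (hsum : e1 * dpsi (psi3 p q s x y z) n1 + e2 * dpsi (psi3 p q s x y z) n2
      + e3 * dpsi (psi3 p q s x y z) n3 = 0)
    (hind : ¬ ((n1 : ℤ) * dpsi (psi3 p q s x y z) n2 = n2 * dpsi (psi3 p q s x y z) n1 ∧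
      (n1 : ℤ) * dpsi (psi3 p q s x y z) n3 = n3 * dpsi (psi3 p q s x y z) n1 ∧
      (n2 : ℤ) * dpsi (psi3 p q s x y z) n3 = n3 * dpsi (psi3 p q s x y z) n2)) :
    Good e1 e2 e3 n1 n2 n3 L := by
  refine ⟨psi3 p q s x y z, ?_, ?_, hsum, hind, psi3_bound hpq hps hqs (by positivity) hx hy hz⟩
  · intro r hr
    rw [psi3_apply]
    have h1 : r ≠ p := by rintro rfl; exact hr hp
    have h2 : r ≠ q := by rintro rfl; exact hr hq
    have h3 : r ≠ s := by rintro rfl; exact hr hs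
    simp [h1, h2, h3]
  · intro r _ a b c
    rw [psi3_apply]
    have h1 : r ≠ p := by rintro rfl; tauto
    have h2 : r ≠ q := by rintro rfl; tauto
    have h3 : r ≠ s := by rintro rfl; tauto
    simp [h1, h2, h3]

lemma abs_sign_mul {e : ℤ} (h : e * e = 1) (x : ℤ) : |((e * x : ℤ) : ℝ)| = |(x:ℝ)| := by
  push_cast
  rw [abs_mul, abs_sign h, one_mul]

lemma z_zero {s p v w : ℕ} {x z : ℤ} (hs : s.Prime) (hp : p.Prime) (hps : p ≠ s)
    (hv : 0 < v) (hz : |z| * v < s) (h : (s : ℤ) * w * x = p * v * z) : z = 0 := by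
  have hsZ : Prime (s : ℤ) := Nat.prime_iff_prime_int.mp hs
  have h1 : (s : ℤ) ∣ p * (v * z) := ⟨w * x, by linear_combination -h⟩
  have h2 : (s : ℤ) ∣ v * z := by
    rcases hsZ.dvd_or_dvd h1 with h2 | h2
    · exfalso
      have : s ∣ p := by exact_mod_cast h2
      exact hps ((Nat.prime_dvd_prime_iff_eq hs hp).mp this).symm
    · exact h2
  have h3 : (v : ℤ) * z = 0 := by
    apply Int.eq_zero_of_abs_lt_dvd h2
    rw [abs_mul, Nat.abs_cast]; linarith
  rcases mul_eq_zero.mp h3 with h4 | h4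
  · omega
  · exact h4

lemma caseA1 (h : Hyp e1 e2 e3 n1 n2 n3 L) {p q s : ℕ} (hp : p.Prime) (hq : q.Prime) (hs : s.Prime)
    (p1 : p ∣ n1) (q2 : q ∣ n2) (s3 : s ∣ n3) (hsL : L ^ 5 ≤ s) : Good e1 e2 e3 n1 n2 n3 L := by
  have hL := h.L_big
  have p2 := ndvd h.c12 hp p1
  have p3 := ndvd h.c13 hp p1
  have q1 := ndvd h.c12.symm hq q2
  have q3 := ndvd h.c23 hq q2
  have s1 := ndvd h.c13.symm hs s3
  have s2 := ndvd h.c23.symm hs s3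
  have hpq : p ≠ q := by rintro rfl; exact q1 p1
  have hps : p ≠ s := by rintro rfl; exact s1 p1
  have hqs : q ≠ s := by rintro rfl; exact s2 q2
  obtain ⟨x, y, z, hne, hx, hy, hz, hzs, heq⟩ := h.pig (v := n3.factorization s)
    (cf_pos h.p1 hp p1) (cf_pos h.p2 hq q2) (cf_pos h.p3 hs s3)
    (h.cf_le' h.p1 h.b1 hp p1) (h.cf_le' h.p2 h.b2 hq q2) (h.cf_le' h.p3 h.b3 hs s3)
    (h.val h.p3 h.b3 hs) hsL
  have hd1 := dpsi_psi3 h.p1 hp hq hs (e1 * x) (e2 * y) (e3 * (-z))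
  have hd2 := dpsi_psi3 h.p2 hp hq hs (e1 * x) (e2 * y) (e3 * (-z))
  have hd3 := dpsi_psi3 h.p3 hp hq hs (e1 * x) (e2 * y) (e3 * (-z))
  rw [cf_zero q1, cf_zero s1] at hd1
  rw [cf_zero p2, cf_zero s2] at hd2
  rw [cf_zero p3, cf_zero q3] at hd3
  have v3 : 0 < n3.factorization s := hs.factorization_pos_of_dvd h.p3.ne' s3
  have v1 : 0 < n1.factorization p := hp.factorization_pos_of_dvd h.p1.ne' p1
  have v2 : 0 < n2.factorization q := hq.factorization_pos_of_dvd h.p2.ne' q2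
  have N1 : (n1 : ℤ) ≠ 0 := by exact_mod_cast h.p1.ne'
  have N2 : (n2 : ℤ) ≠ 0 := by exact_mod_cast h.p2.ne'
  have N3 : (n3 : ℤ) ≠ 0 := by exact_mod_cast h.p3.ne'
  have m1 := cf_mul p1
  have m2 := cf_mul q2
  have m3 := cf_mul s3
  refine good3 hp hq hs (Or.inl p1) (Or.inr (Or.inl q2)) (Or.inr (Or.inr s3)) hpq hps hqs
    (by linarith)
    (x := e1 * x) (y := e2 * y) (z := e3 * (-z)) (by rwa [abs_sign_mul h.s1])
    (by rwa [abs_sign_mul h.s2]) (by rw [abs_sign_mul h.s3]; simpa using hz) ?_ ?_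
  · rw [hd1, hd2, hd3]
    linear_combination heq + cf n1 p * x * h.s1 + cf n2 q * y * h.s2 - cf n3 s * z * h.s3
  · rw [hd1, hd2, hd3]
    rintro ⟨-, i13, i23⟩
    have k1 : (s : ℤ) * n1.factorization p * (e1 * x) = p * n3.factorization s * (e3 * (-z)) := by
      apply mul_left_cancel₀ (mul_ne_zero N1 N3)
      linear_combination (-(p : ℤ) * s) * i13 - (n3 : ℤ) * s * e1 * x * m1 - (n1 : ℤ) * p * e3 * z * m3
    have k2 : (s : ℤ) * n2.factorization q * (e2 * y) = q * n3.factorization s * (e3 * (-z)) := by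
      apply mul_left_cancel₀ (mul_ne_zero N2 N3)
      linear_combination (-(q : ℤ) * s) * i23 - (n3 : ℤ) * s * e2 * y * m2 - (n2 : ℤ) * q * e3 * z * m3
    have hz' : |e3 * -z| * (n3.factorization s : ℤ) < s := by
      have : |e3 * -z| = |z| := by
        rcases mul_self_eq_one_iff.mp h.s3 with r | r <;> rw [r] <;> simp
      rwa [this]
    have z0 := z_zero hs hp hps v3 hz' k1
    rw [z0] at k1 k2
    have e10 : e1 ≠ 0 := by rintro r; have := h.s1; simp [r] at this
    have e20 : e2 ≠ 0 := by rintro r; have := h.s2; simp [r] at this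
    apply hne
    simp [hs.ne_zero, v1.ne', v2.ne', e10, e20] at k1 k2
    exact ⟨k1, k2⟩

lemma caseA2 (h : Hyp e1 e2 e3 n1 n2 n3 L) {p q s : ℕ} (hp : p.Prime) (hq : q.Prime) (hs : s.Prime)
    (p1 : p ∣ n1) (q2 : q ∣ n2) (s1 : s ∣ n1) (hps : p ≠ s) (hsL : L ^ 5 ≤ s) :
    Good e1 e2 e3 n1 n2 n3 L := by
  have hL := h.L_big
  have p2 := ndvd h.c12 hp p1
  have p3 := ndvd h.c13 hp p1
  have q1 := ndvd h.c12.symm hq q2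
  have q3 := ndvd h.c23 hq q2
  have s3 := ndvd h.c13 hs s1
  have s2 := ndvd h.c12 hs s1
  have hpq : p ≠ q := by rintro rfl; exact q1 p1
  have hqs : q ≠ s := by rintro rfl; exact s2 q2
  obtain ⟨x, y, z, hne, hx, hy, hz, hzs, heq⟩ := h.pig (v := n1.factorization s)
    (cf_pos h.p1 hp p1) (cf_pos h.p2 hq q2) (cf_pos h.p1 hs s1)
    (h.cf_le' h.p1 h.b1 hp p1) (h.cf_le' h.p2 h.b2 hq q2) (h.cf_le' h.p1 h.b1 hs s1)
    (h.val h.p1 h.b1 hs) hsL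
  have hd1 := dpsi_psi3 h.p1 hp hq hs (e1 * x) (e2 * y) (e1 * (-z))
  have hd2 := dpsi_psi3 h.p2 hp hq hs (e1 * x) (e2 * y) (e1 * (-z))
  have hd3 := dpsi_psi3 h.p3 hp hq hs (e1 * x) (e2 * y) (e1 * (-z))
  rw [cf_zero q1] at hd1
  rw [cf_zero p2, cf_zero s2] at hd2
  rw [cf_zero p3, cf_zero q3, cf_zero s3] at hd3
  have v3 : 0 < n1.factorization s := hs.factorization_pos_of_dvd h.p1.ne' s1
  have v1 : 0 < n1.factorization p := hp.factorization_pos_of_dvd h.p1.ne' p1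
  have N1 : (n1 : ℤ) ≠ 0 := by exact_mod_cast h.p1.ne'
  have N2 : (n2 : ℤ) ≠ 0 := by exact_mod_cast h.p2.ne'
  have N3 : (n3 : ℤ) ≠ 0 := by exact_mod_cast h.p3.ne'
  have m1 := cf_mul p1
  have m3 := cf_mul s1
  have e10 : e1 ≠ 0 := by rintro r; have := h.s1; simp [r] at this
  have e20 : e2 ≠ 0 := by rintro r; have := h.s2; simp [r] at this
  refine good3 hp hq hs (Or.inl p1) (Or.inr (Or.inl q2)) (Or.inl s1) hpq hps hqs
    (by linarith)
    (x := e1 * x) (y := e2 * y) (z := e1 * (-z)) (by rwa [abs_sign_mul h.s1])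
    (by rwa [abs_sign_mul h.s2]) (by rw [abs_sign_mul h.s1]; simpa using hz) ?_ ?_
  · rw [hd1, hd2, hd3]
    linear_combination heq + cf n1 p * x * h.s1 + cf n2 q * y * h.s2 - cf n1 s * z * h.s1
  · rw [hd1, hd2, hd3]
    rintro ⟨-, -, i23⟩
    have hq0 := (cf_pos h.p2 hq q2).ne'
    have y0 : y = 0 := by
      simpa [h.p3.ne', hq0, e20] using i23
    rw [y0] at heq
    have k1 : (s : ℤ) * n1.factorization p * x = p * n1.factorization s * z := by
      apply mul_left_cancel₀ N1
      linear_combination ((p : ℤ) * s) * heq - (s : ℤ) * x * m1 + (p : ℤ) * z * m3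
    have z0 := z_zero hs hp hps v3 hzs k1
    rw [z0] at k1
    apply hne
    simp [hs.ne_zero, v1.ne'] at k1
    exact ⟨k1, y0⟩

lemma caseB (h : Hyp e1 e2 e3 n1 n2 n3 L) {p q : ℕ} (hp : p.Prime) (hq : q.Prime)
    (p1 : p ∣ n1) (q2 : q ∣ n2) (hpL : L ^ 5 ≤ p) (hqL : L ^ 5 ≤ q) :
    Good e1 e2 e3 n1 n2 n3 L := by
  have hL := h.L_big
  have p2 := ndvd h.c12 hp p1
  have p3 := ndvd h.c13 hp p1
  have q1 := ndvd h.c12.symm hq q2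
  have q3 := ndvd h.c23 hq q2
  have hpq : p ≠ q := by rintro rfl; exact q1 p1
  have key : ∀ {n r : ℕ}, 0 < n → (n : ℝ) ≤ L ^ 100 → r.Prime → r ∣ n → L ^ 5 ≤ r →
      |((cf n r : ℤ) : ℝ)| ≤ L ^ 98 := by
    intro n r hn hb hr hd hrL
    have h1 := h.cf_le hn hb hr hd
    have h2 : (0:ℝ) < cf n r := by exact_mod_cast cf_pos hn hr hd
    rw [abs_of_pos h2]
    have h3 : (cf n r : ℝ) * L ^ 5 ≤ L ^ 96 * L ^ 5 := by
      calc (cf n r : ℝ) * L ^ 5 ≤ cf n r * r := by gcongr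
        _ ≤ L ^ 101 := h1
        _ = _ := by ring
    have h4 := le_of_mul_le_mul_right h3 (by positivity)
    exact h4.trans (pow_le_pow_right₀ (by linarith) (by norm_num))
  have hd1 := dpsi_single h.p1 hp (e2 * cf n2 q)
  have hd2 := dpsi_single h.p2 hp (e2 * cf n2 q)
  have hd3 := dpsi_single h.p3 hp (e2 * cf n2 q)
  have gd1 := dpsi_single h.p1 hq (e1 * - cf n1 p)
  have gd2 := dpsi_single h.p2 hq (e1 * - cf n1 p)
  have gd3 := dpsi_single h.p3 hq (e1 * - cf n1 p)
  rw [cf_zero p2] at hd2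
  rw [cf_zero p3] at hd3
  rw [cf_zero q1] at gd1
  rw [cf_zero q3] at gd3
  have N3 : (n3 : ℤ) ≠ 0 := by exact_mod_cast h.p3.ne'
  have e20 : e2 ≠ 0 := by rintro r; have := h.s2; simp [r] at this
  have hp0 := (cf_pos h.p1 hp p1).ne'
  have hq0 := (cf_pos h.p2 hq q2).ne'
  refine ⟨Pi.single p (e2 * cf n2 q) + Pi.single q (e1 * - cf n1 p), ?_, ?_, ?_, ?_, ?_⟩
  · intro r hr
    have h1 : r ≠ p := by rintro rfl; exact hr hp
    have h2 : r ≠ q := by rintro rfl; exact hr hq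
    simp [h1, h2]
  · intro r _ a b c
    have h1 : r ≠ p := by rintro rfl; tauto
    have h2 : r ≠ q := by rintro rfl; tauto
    simp [h1, h2]
  · simp only [dpsi_add, hd1, hd2, hd3, gd1, gd2, gd3]; ring
  · simp only [dpsi_add, hd1, hd2, hd3, gd1, gd2, gd3]
    rintro ⟨-, i13, -⟩
    simp [h.p3.ne', hp0, hq0, e20] at i13
  · intro r
    by_cases h1 : r = p
    · subst h1
      have := key h.p2 h.b2 hq q2 hqL
      rw [← abs_sign_mul h.s2] at this
      simpa [hpq] using this
    by_cases h2 : r = q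
    · subst h2
      have := key h.p1 h.b1 hp p1 hpL
      rw [← abs_neg, ← Int.cast_neg, ← abs_sign_mul h.s1] at this
      simpa [h1] using this
    simp [h1, h2]
    linarith [pow_pos (show (0:ℝ) < L by linarith) 98]

lemma crt (v : ℕ → ℕ) (R : Finset ℕ) : (∀ r ∈ R, r.Prime ∧ ¬ r ∣ v r) → ∀ B : ℤ,
    ∃ (φ : ℕ → ℤ) (M : ℤ), (∀ r ∈ R, 0 ≤ φ r ∧ φ r < r) ∧
      (B : ℝ) = (∏ r ∈ R, (r : ℝ)) * (∑ r ∈ R, (v r : ℝ) * φ r / r + M) := by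
  classical
  induction R using Finset.induction_on with
  | empty => intro _ B; exact ⟨0, B, by simp, by simp⟩
  | insert a s ha ih =>
    intro hR B
    have hs : ∀ r ∈ s, r.Prime ∧ ¬ r ∣ v r := fun r hr => hR r (Finset.mem_insert_of_mem hr)
    obtain ⟨hap, hav⟩ := hR a (Finset.mem_insert_self _ _)
    obtain ⟨P, hP⟩ : ∃ P, P = ∏ r ∈ s, r := ⟨_, rfl⟩
    have hcop : Nat.Coprime (P * v a) a := by
      apply Nat.Coprime.symm
      rw [hap.coprime_iff_not_dvd, hap.dvd_mul, not_or]
      refine ⟨?_, hav⟩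
      rw [hP, Prime.dvd_finsetProd_iff hap.prime]
      rintro ⟨r, hr, hd⟩
      rw [Nat.prime_dvd_prime_iff_eq hap (hs r hr).1] at hd
      exact ha (hd ▸ hr)
    have hcop' : IsCoprime ((P * v a : ℕ) : ℤ) (a : ℤ) := Nat.isCoprime_iff_coprime.mpr hcop
    obtain ⟨u, w, huw⟩ := hcop'
    have a0 : (0:ℤ) < a := by exact_mod_cast hap.pos
    -- φ_a = (B u) mod a
    have hdiv : B - ((P * v a : ℕ) : ℤ) * ((B * u) % a)
        = a * (B * w + ((P * v a : ℕ) : ℤ) * ((B * u) / a)) := by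
      have := Int.emod_add_mul_ediv (B * u) a
      linear_combination (-B) * huw - ((P * v a : ℕ) : ℤ) * this
    obtain ⟨φ, M, h1, h2⟩ := ih hs (B * w + ((P * v a : ℕ) : ℤ) * ((B * u) / a))
    refine ⟨Function.update φ a ((B * u) % a), M, ?_, ?_⟩
    · intro r hr
      by_cases hra : r = a
      · subst hra
        simp only [Function.update_self]
        exact ⟨Int.emod_nonneg _ a0.ne', Int.emod_lt_of_pos _ a0⟩
      · simp only [Function.update_of_ne hra]
        exact h1 r ((Finset.mem_insert.mp hr).resolve_left hra)
    · rw [Finset.prod_insert ha, Finset.sum_insert ha]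
      have hsum : ∑ r ∈ s, (v r : ℝ) * (Function.update φ a ((B * u) % a) r : ℤ) / r
          = ∑ r ∈ s, (v r : ℝ) * φ r / r := by
        apply Finset.sum_congr rfl
        intro r hr
        rw [Function.update_of_ne (by rintro rfl; exact ha hr)]
      rw [hsum, Function.update_self]
      have hdR := congrArg (Int.cast : ℤ → ℝ) hdiv
      rw [Int.cast_sub, Int.cast_mul, Int.cast_mul (a : ℤ), h2] at hdR
      have hPR : (∏ r ∈ s, (r : ℝ)) = P := by rw [hP]; push_cast; rfl
      rw [hPR] at hdR ⊢
      have aR : (a : ℝ) ≠ 0 := by exact_mod_cast hap.ne_zero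
      push_cast at hdR
      generalize (((B * u % a : ℤ)) : ℝ) = t at *
      field_simp
      linear_combination hdR

lemma cf_real {n r : ℕ} (hr : r.Prime) (hd : r ∣ n) :
    (cf n r : ℝ) = n * (n.factorization r / r) := by
  have h1 : (cf n r : ℝ) * r = n * n.factorization r := by exact_mod_cast cf_mul hd
  have : (r : ℝ) ≠ 0 := by exact_mod_cast hr.ne_zero
  field_simp
  exact h1

lemma prodR (h : Hyp e1 e2 e3 n1 n2 n3 L) (hr : L ^ 25 ≤ radN n1) :
    L ^ 19 ≤ ((∏ r ∈ n1.primeFactors with ¬ r ∣ n1.factorization r, r : ℕ) : ℝ) := by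
  have hL := h.L_big
  have e : radN n1 = (∏ r ∈ n1.primeFactors with r ∣ n1.factorization r, r) *
      (∏ r ∈ n1.primeFactors with ¬ r ∣ n1.factorization r, r) :=
    (Finset.prod_filter_mul_prod_filter_not _ _ _).symm
  have e2 : (∏ r ∈ n1.primeFactors with r ∣ n1.factorization r, r) =
      (∏ r ∈ (n1.primeFactors.filter fun r => r ∣ n1.factorization r) with r < 20, r) *
      (∏ r ∈ (n1.primeFactors.filter fun r => r ∣ n1.factorization r) with ¬ r < 20, r) :=
    (Finset.prod_filter_mul_prod_filter_not _ _ _).symm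
  have b1 : (∏ r ∈ (n1.primeFactors.filter fun r => r ∣ n1.factorization r) with r < 20, r)
      ≤ Nat.factorial 20 := by
    have ef : Nat.factorial 20 = ∏ i ∈ Finset.Icc 1 20, i := by decide +kernel
    rw [ef]
    apply Finset.prod_le_prod_of_subset_of_one_le'
    · intro r hr
      simp only [Finset.mem_filter, Nat.mem_primeFactors, Finset.mem_Icc] at hr ⊢
      exact ⟨hr.1.1.1.one_lt.le, hr.2.le⟩
    · intro i hi _
      exact (Finset.mem_Icc.mp hi).1
  have b2 : (∏ r ∈ (n1.primeFactors.filter fun r => r ∣ n1.factorization r) with ¬ r < 20, r) ^ 20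
      ≤ n1 := by
    rw [← Finset.prod_pow]
    calc _ ≤ ∏ r ∈ (n1.primeFactors.filter fun r => r ∣ n1.factorization r) with ¬ r < 20,
          r ^ n1.factorization r := by
          apply Finset.prod_le_prod'
          intro r hr
          simp only [Finset.mem_filter, Nat.mem_primeFactors] at hr
          apply Nat.pow_le_pow_right hr.1.1.1.pos
          have := Nat.le_of_dvd (hr.1.1.1.factorization_pos_of_dvd h.p1.ne' hr.1.1.2.1) hr.1.2
          omega
      _ ≤ ∏ r ∈ n1.primeFactors, r ^ n1.factorization r := by
          apply Finset.prod_le_prod_of_subset_of_one_le'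
          · exact (Finset.filter_subset _ _).trans (Finset.filter_subset _ _)
          · intro i hi _
            exact Nat.one_le_pow _ _ (Nat.prime_of_mem_primeFactors hi).pos
      _ = n1 := Nat.prod_factorization_pow_eq_self h.p1.ne'
  rw [e2] at e
  generalize (∏ r ∈ n1.primeFactors with ¬ r ∣ n1.factorization r, r) = P at *
  generalize (∏ r ∈ (n1.primeFactors.filter fun r => r ∣ n1.factorization r) with r < 20, r) = Q at *
  generalize (∏ r ∈ (n1.primeFactors.filter fun r => r ∣ n1.factorization r) with ¬ r < 20, r) = S at *
  have Q1 : (Q : ℝ) ≤ L := le_trans (by exact_mod_cast b1) h.big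
  have S1 : (S : ℝ) ≤ L ^ 5 := by
    have : (S : ℝ) ^ 20 ≤ (L ^ 5) ^ 20 := by
      calc (S : ℝ) ^ 20 ≤ n1 := by exact_mod_cast b2
        _ ≤ L ^ 100 := h.b1
        _ = _ := by ring
    exact le_of_pow_le_pow_left₀ (by norm_num) (by positivity) this
  rw [e] at hr
  push_cast at hr
  have : L ^ 6 * L ^ 19 ≤ L ^ 6 * P := by
    calc L ^ 6 * L ^ 19 = L ^ 25 := by ring
      _ ≤ (Q:ℝ) * S * P := hr
      _ ≤ L * L ^ 5 * P := by gcongr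
      _ = _ := by ring
  exact le_of_mul_le_mul_left this (by positivity)

lemma caseC (h : Hyp e1 e2 e3 n1 n2 n3 L) (hsm : ∀ r, r.Prime → r ∣ n1 → (r:ℝ) ≤ L ^ 5)
    (hr : L ^ 25 ≤ radN n1) {p : ℕ} (hp : p.Prime) (p2 : p ∣ n2) :
    Good e1 e2 e3 n1 n2 n3 L := by
  classical
  have hL := h.L_big
  have hL1 : 1 ≤ L := by linarith
  have hL0 : 0 < L := by linarith
  have hPL := prodR h hr
  obtain ⟨R, hR⟩ : ∃ R, R = n1.primeFactors.filter (fun r => ¬ r ∣ n1.factorization r) := ⟨_, rfl⟩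
  rw [← hR] at hPL
  obtain ⟨P, hP⟩ : ∃ P, P = ∏ r ∈ R, r := ⟨_, rfl⟩
  rw [← hP] at hPL
  have hRp : ∀ r ∈ R, r.Prime ∧ r ∣ n1 ∧ ¬ r ∣ n1.factorization r := by
    intro r hr
    simp only [hR, Finset.mem_filter, Nat.mem_primeFactors] at hr
    exact ⟨hr.1.1, hr.1.2.1, hr.2⟩
  have hP1 : P ∣ n1 := by
    rw [hP, hR]
    exact (Finset.prod_dvd_prod_of_subset _ _ _ (Finset.filter_subset _ _)).trans
      (Nat.prod_primeFactors_dvd n1)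
  obtain ⟨N, hN⟩ := hP1
  have hPpos : (0:ℝ) < P := lt_of_lt_of_le (by positivity) hPL
  have hne : n1 ≠ 1 := by
    rintro h1
    rw [h1] at hr
    simp [radN] at hr
    have : L ^ 1 ≤ L ^ 25 := pow_le_pow_right₀ hL1 (by norm_num)
    linarith
  obtain ⟨r0, hr0, r01⟩ := Nat.exists_prime_and_dvd hne
  obtain ⟨φ, M, hφ, hM⟩ := crt (fun r => n1.factorization r) R
    (fun r hr => ⟨(hRp r hr).1, (hRp r hr).2.2⟩) (cf n2 p)
  have hPR : (∏ r ∈ R, (r : ℝ)) = P := by rw [hP]; push_cast; rfl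
  rw [hPR] at hM
  obtain ⟨v0, hv0⟩ : ∃ v, v = n1.factorization r0 := ⟨_, rfl⟩
  have v0L : (v0 : ℝ) ≤ L := hv0 ▸ h.val h.p1 h.b1 hr0
  have v0pos : 0 < v0 := hv0 ▸ hr0.factorization_pos_of_dvd h.p1.ne' r01
  have p1 := ndvd h.c12.symm hp p2
  have p3 := ndvd h.c23 hp p2
  have r02 := ndvd h.c12 hr0 r01
  have r03 := ndvd h.c13 hr0 r01
  have B0 := cf_pos h.p2 hp p2
  have BL := h.cf_le' h.p2 h.b2 hp p2
  set B := cf n2 p with hB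
  set y : ℤ := e1 * (e2 * (-(v0 * N))) with hy
  set ψ : ℕ → ℤ := ∑ r ∈ R, Pi.single r (v0 * φ r) + Pi.single r0 (r0 * M) + Pi.single p y with hψ
  have hd1 : (dpsi ψ n1 : ℝ) = v0 * N * B := by
    rw [hψ, dpsi_add, dpsi_add, dpsi_sum, dpsi_single h.p1 hr0, dpsi_single h.p1 hp, cf_zero p1]
    push_cast
    have : ∑ r ∈ R, ((dpsi (Pi.single r (v0 * φ r)) n1 : ℤ) : ℝ)
        = n1 * v0 * ∑ r ∈ R, (n1.factorization r : ℝ) * φ r / r := by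
      rw [Finset.mul_sum]
      apply Finset.sum_congr rfl
      intro r hr
      rw [dpsi_single h.p1 (hRp r hr).1]
      push_cast
      rw [cf_real (hRp r hr).1 (hRp r hr).2.1]
      ring
    rw [this, cf_real hr0 r01, ← hv0, hM]
    have hN' : (n1 : ℝ) = P * N := by exact_mod_cast hN
    have : (r0 : ℝ) ≠ 0 := by exact_mod_cast hr0.ne_zero
    rw [hN']
    field_simp
    ring
  have hd1' : dpsi ψ n1 = v0 * N * B := by exact_mod_cast hd1
  have hz2 : ∑ r ∈ R, dpsi (Pi.single r (v0 * φ r)) n2 = 0 := by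
    apply Finset.sum_eq_zero
    intro r hr
    rw [dpsi_single h.p2 (hRp r hr).1, cf_zero (ndvd h.c12 (hRp r hr).1 (hRp r hr).2.1), zero_mul]
  have hz3 : ∑ r ∈ R, dpsi (Pi.single r (v0 * φ r)) n3 = 0 := by
    apply Finset.sum_eq_zero
    intro r hr
    rw [dpsi_single h.p3 (hRp r hr).1, cf_zero (ndvd h.c13 (hRp r hr).1 (hRp r hr).2.1), zero_mul]
  have hd2 : dpsi ψ n2 = B * y := by
    rw [hψ, dpsi_add, dpsi_add, dpsi_sum, dpsi_single h.p2 hr0, dpsi_single h.p2 hp, hz2,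
      cf_zero r02]; ring
  have hd3 : dpsi ψ n3 = 0 := by
    rw [hψ, dpsi_add, dpsi_add, dpsi_sum, dpsi_single h.p3 hr0, dpsi_single h.p3 hp, hz3,
      cf_zero r03, cf_zero p3]; ring
  have hψa : ∀ r, ψ r = (if r ∈ R then v0 * φ r else 0) + (if r = r0 then r0 * M else 0)
      + (if r = p then y else 0) := by
    intro r
    simp [hψ, Finset.sum_apply, Pi.single_apply]
  have Npos : 0 < N := Nat.pos_of_ne_zero (by rintro rfl; have := h.p1; omega)
  refine ⟨ψ, ?_, ?_, ?_, ?_, ?_⟩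
  · intro r hr
    have h1 : r ≠ r0 := by rintro rfl; exact hr hr0
    have h2 : r ≠ p := by rintro rfl; exact hr hp
    have h3 : r ∉ R := fun hh => hr (hRp r hh).1
    rw [hψa]; simp [h1, h2, h3]
  · intro r _ a b c
    have h1 : r ≠ r0 := by rintro rfl; tauto
    have h2 : r ≠ p := by rintro rfl; tauto
    have h3 : r ∉ R := fun hh => a (hRp r hh).2.1
    rw [hψa]; simp [h1, h2, h3]
  · rw [hd1', hd2, hd3, hy]
    linear_combination (-e1 * v0 * N * B) * h.s2
  · rw [hd1', hd2, hd3]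
    rintro ⟨-, i13, -⟩
    simp [h.p3.ne', v0pos.ne', Npos.ne', B0.ne'] at i13
  · -- bounds
    have hcard : (R.card : ℝ) ≤ L := by
      apply h.hlog
      refine le_trans ?_ h.b1
      have c1 : 2 ^ R.card ≤ P := by
        rw [hP]
        exact Finset.pow_card_le_prod _ _ _ (fun r hr => (hRp r hr).1.two_le)
      have c2 : P ≤ n1 := Nat.le_of_dvd h.p1 ⟨N, hN⟩
      exact_mod_cast c1.trans c2
    have hsumb : |∑ r ∈ R, (n1.factorization r : ℝ) * φ r / r| ≤ L * L := by
      calc _ ≤ ∑ r ∈ R, |(n1.factorization r : ℝ) * φ r / r| := Finset.abs_sum_le_sum_abs _ _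
        _ ≤ ∑ r ∈ R, L := by
          apply Finset.sum_le_sum
          intro r hr
          have rpos : (0:ℝ) < r := by exact_mod_cast (hRp r hr).1.pos
          have f0 : (0:ℝ) ≤ φ r := by exact_mod_cast (hφ r hr).1
          have f1 : (φ r : ℝ) ≤ r := by exact_mod_cast (hφ r hr).2.le
          rw [abs_of_nonneg (by positivity), div_le_iff₀ rpos]
          have := h.val h.p1 h.b1 (hRp r hr).1
          gcongr
        _ = R.card * L := by simp
        _ ≤ L * L := by gcongr
    have hMb : |(M : ℝ)| ≤ L ^ 82 + L * L := by
      have e : (M : ℝ) = B / P - ∑ r ∈ R, (n1.factorization r : ℝ) * φ r / r := by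
        rw [hM]; field_simp; ring
      have hBP : |(B : ℝ) / P| ≤ L ^ 82 := by
        have : (0:ℝ) < B := by exact_mod_cast B0
        rw [abs_of_pos (by positivity), div_le_iff₀ hPpos]
        calc (B : ℝ) ≤ L ^ 101 := BL
          _ = L ^ 82 * L ^ 19 := by ring
          _ ≤ _ := by gcongr
      rw [e]
      exact (abs_sub _ _).trans (add_le_add hBP hsumb)
    have hNb : (N : ℝ) ≤ L ^ 81 := by
      have hN' : (n1 : ℝ) = P * N := by exact_mod_cast hN
      have : L ^ 19 * N ≤ L ^ 19 * L ^ 81 := by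
        calc L ^ 19 * (N:ℝ) ≤ P * N := by gcongr
          _ = n1 := hN'.symm
          _ ≤ L ^ 100 := h.b1
          _ = _ := by ring
      exact le_of_mul_le_mul_left this (by positivity)
    have hyb : |(y : ℝ)| ≤ L ^ 90 := by
      rw [hy, abs_sign_mul h.s1, abs_sign_mul h.s2]
      push_cast
      rw [abs_neg, abs_of_nonneg (by positivity)]
      calc (v0 : ℝ) * N ≤ L * L ^ 81 := by gcongr
        _ = L ^ 82 := by ring
        _ ≤ L ^ 90 := pow_le_pow_right₀ hL1 (by norm_num)
    have m2 : L * L ≤ L ^ 82 := by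
      calc L * L = L ^ 2 := by ring
        _ ≤ _ := pow_le_pow_right₀ hL1 (by norm_num)
    have hmb : |((r0 * M : ℤ) : ℝ)| ≤ L ^ 90 := by
      push_cast
      rw [abs_mul, Nat.abs_cast]
      calc (r0 : ℝ) * |(M:ℝ)| ≤ L ^ 5 * (L ^ 82 + L * L) := by
            have := hsm r0 hr0 r01
            gcongr
        _ ≤ L ^ 5 * (2 * L ^ 82) := by gcongr; linarith
        _ ≤ L ^ 5 * (L * L ^ 82) := by gcongr; linarith
        _ = L ^ 88 := by ring
        _ ≤ L ^ 90 := pow_le_pow_right₀ hL1 (by norm_num)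
    intro r
    have t1 : |((if r ∈ R then v0 * φ r else 0 : ℤ) : ℝ)| ≤ L ^ 90 := by
      split_ifs with hr
      · have f0 : (0:ℝ) ≤ φ r := by exact_mod_cast (hφ r hr).1
        have f1 : (φ r : ℝ) ≤ r := by exact_mod_cast (hφ r hr).2.le
        have f2 := hsm r (hRp r hr).1 (hRp r hr).2.1
        push_cast
        rw [abs_of_nonneg (by positivity)]
        calc (v0 : ℝ) * φ r ≤ L * L ^ 5 := by
              have := f1.trans f2
              gcongr
          _ = L ^ 6 := by ring
          _ ≤ L ^ 90 := pow_le_pow_right₀ hL1 (by norm_num)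
      · simp; positivity
    have t2 : |((if r = r0 then r0 * M else 0 : ℤ) : ℝ)| ≤ L ^ 90 := by
      split_ifs
      · exact hmb
      · simp; positivity
    have t3 : |((if r = p then y else 0 : ℤ) : ℝ)| ≤ L ^ 90 := by
      split_ifs
      · exact hyb
      · simp; positivity
    rw [hψa, Int.cast_add, Int.cast_add]
    calc _ ≤ _ := abs_add_three _ _ _
      _ ≤ L ^ 90 + L ^ 90 + L ^ 90 := add_le_add (add_le_add t1 t2) t3
      _ ≤ L * L ^ 90 := by nlinarith [pow_pos hL0 90]
      _ = L ^ 91 := by ring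
      _ ≤ L ^ 98 := pow_le_pow_right₀ hL1 (by norm_num)

lemma radN_le {n : ℕ} (hn : 0 < n) : radN n ≤ n := Nat.le_of_dvd hn (Nat.prod_primeFactors_dvd n)

lemma radN_pos (n : ℕ) : 0 < radN n :=
  Finset.prod_pos fun _ hp => (Nat.prime_of_mem_primeFactors hp).pos

/-- one of the others is one -/
lemma big1 (h : Hyp e1 e2 e3 n1 n2 n3 L) {s : ℕ} (hs : s.Prime) (s1 : s ∣ n1) (hsL : L ^ 5 ≤ s)
    (h2 : n2 ≠ 1) (h3 : n3 = 1) : Good e1 e2 e3 n1 n2 n3 L := by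
  have hL := h.L_big
  have hL1 : 1 ≤ L := by linarith
  obtain ⟨q, hq, q2⟩ := Nat.exists_prime_and_dvd h2
  by_cases hA : ∃ p, p.Prime ∧ p ∣ n1 ∧ p ≠ s
  · obtain ⟨p, hp, p1, hps⟩ := hA
    exact caseA2 h hp hq hs p1 q2 s1 hps hsL
  push Not at hA
  by_cases hB : ∃ t, t.Prime ∧ t ∣ n2 ∧ L ^ 5 ≤ t
  · obtain ⟨t, ht, t2, htL⟩ := hB
    exact caseB h hs ht s1 t2 hsL htL
  push Not at hB
  apply Good.swap12
  refine caseC h.swap12 (fun r hr hd => (hB r hr hd).le) ?_ hs s1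
  have hpf : n1.primeFactors = {s} := by
    ext r
    simp only [Nat.mem_primeFactors, Finset.mem_singleton]
    constructor
    · rintro ⟨a, b, _⟩; exact hA r a b
    · rintro rfl; exact ⟨hs, s1, h.p1.ne'⟩
  have hr1 : radN n1 = s := by simp [radN, hpf]
  have hr3 : radN n3 = 1 := by simp [radN, h3]
  obtain ⟨k, hk⟩ := s1
  have hk1 : k ≠ 1 := by
    rintro rfl
    apply h.hm n2 s hs
    rw [hk, h3, mul_one]
    rw [Multiset.insert_eq_cons, Multiset.insert_eq_cons, Multiset.insert_eq_cons,
      Multiset.insert_eq_cons]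
    rw [Multiset.cons_swap]
    have : (s ::ₘ {1} : Multiset ℕ) = 1 ::ₘ {s} := Multiset.cons_swap _ _ _
    rw [this, Multiset.cons_swap]
  obtain ⟨t, ht, tk⟩ := Nat.exists_prime_and_dvd hk1
  have hts : t = s := hA t ht (hk ▸ tk.mul_left s)
  subst hts
  have hss : t * t ≤ n1 := by
    rw [hk]
    apply Nat.mul_le_mul_left
    apply Nat.le_of_dvd _ tk
    rcases Nat.eq_zero_or_pos k with h0 | h0
    · have := h.p1; rw [hk, h0] at this; simp at this
    · exact h0
  have t50 : (t : ℝ) ≤ L ^ 50 := by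
    have : (t : ℝ) ^ 2 ≤ (L ^ 50) ^ 2 := by
      calc (t:ℝ) ^ 2 = ((t * t : ℕ) : ℝ) := by push_cast; ring
        _ ≤ n1 := by exact_mod_cast hss
        _ ≤ L ^ 100 := h.b1
        _ = _ := by ring
    exact le_of_pow_le_pow_left₀ (by norm_num) (by positivity) this
  have hrad := h.hrad
  rw [hr1, hr3] at hrad
  have : L ^ 50 * L ^ 30 ≤ L ^ 50 * radN n2 := by
    calc L ^ 50 * L ^ 30 = L ^ 80 := by ring
      _ ≤ t * radN n2 * ((1 : ℕ) : ℝ) := hrad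
      _ = t * radN n2 := by simp
      _ ≤ _ := by gcongr
  have := le_of_mul_le_mul_left this (by positivity)
  exact (pow_le_pow_right₀ hL1 (by norm_num)).trans this

lemma not_both_one (h : Hyp e1 e2 e3 n1 n2 n3 L) (hb : L < n1) : ¬ (n2 = 1 ∧ n3 = 1) := by
  rintro ⟨h2, h3⟩
  have hL := h.L_big
  have hs := h.sum
  rw [h2, h3] at hs
  have h1 : (3:ℝ) < n1 := by linarith
  have h1' : 3 < n1 := by exact_mod_cast h1
  rcases mul_self_eq_one_iff.mp h.s1 with r | r <;>
  rcases mul_self_eq_one_iff.mp h.s2 with r' | r' <;>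
  rcases mul_self_eq_one_iff.mp h.s3 with r'' | r'' <;>
  rw [r, r', r''] at hs <;> push_cast at hs <;> omega

lemma bigp (h : Hyp e1 e2 e3 n1 n2 n3 L) {s : ℕ} (hs : s.Prime) (s1 : s ∣ n1) (hsL : L ^ 5 ≤ s) :
    Good e1 e2 e3 n1 n2 n3 L := by
  have hL := h.L_big
  have hn1 : L < n1 := by
    have a : L ^ 1 < L ^ 5 := pow_lt_pow_right₀ (by linarith) (by norm_num)
    have b : (s : ℝ) ≤ n1 := by exact_mod_cast Nat.le_of_dvd h.p1 s1
    linarith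
  have hnb := not_both_one h hn1
  by_cases h3 : n3 = 1
  · exact big1 h hs s1 hsL (fun h2 => hnb ⟨h2, h3⟩) h3
  by_cases h2 : n2 = 1
  · exact (big1 h.swap23 hs s1 hsL h3 h2).swap23
  obtain ⟨p, hp, p3⟩ := Nat.exists_prime_and_dvd h3
  obtain ⟨q, hq, q2⟩ := Nat.exists_prime_and_dvd h2
  -- order (n3, n2, n1)
  exact (caseA1 h.swap12.swap23.swap12 hp hq hs p3 q2 s1 hsL).swap12.swap23.swap12

lemma smallp (h : Hyp e1 e2 e3 n1 n2 n3 L) (hsm : ∀ r, r.Prime → r ∣ n1 → (r:ℝ) ≤ L ^ 5)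
    (hr : L ^ 25 ≤ radN n1) : Good e1 e2 e3 n1 n2 n3 L := by
  have hL := h.L_big
  have hn1 : L < n1 := by
    have a : L ^ 1 < L ^ 25 := pow_lt_pow_right₀ (by linarith) (by norm_num)
    have b : (radN n1 : ℝ) ≤ n1 := by exact_mod_cast radN_le h.p1
    linarith
  have hnb := not_both_one h hn1
  by_cases h2 : n2 = 1
  · have h3 : n3 ≠ 1 := fun h3 => hnb ⟨h2, h3⟩
    obtain ⟨p, hp, p3⟩ := Nat.exists_prime_and_dvd h3
    exact (caseC h.swap23 hsm hr hp p3).swap23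
  · obtain ⟨p, hp, p2⟩ := Nat.exists_prime_and_dvd h2
    exact caseC h hsm hr hp p2

lemma core (h : Hyp e1 e2 e3 n1 n2 n3 L) : Good e1 e2 e3 n1 n2 n3 L := by
  have hL := h.L_big
  by_cases g1 : ∃ s, s.Prime ∧ s ∣ n1 ∧ L ^ 5 ≤ s
  · obtain ⟨s, hs, hd, hsL⟩ := g1
    exact bigp h hs hd hsL
  by_cases g2 : ∃ s, s.Prime ∧ s ∣ n2 ∧ L ^ 5 ≤ s
  · obtain ⟨s, hs, hd, hsL⟩ := g2
    exact (bigp h.swap12 hs hd hsL).swap12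
  by_cases g3 : ∃ s, s.Prime ∧ s ∣ n3 ∧ L ^ 5 ≤ s
  · obtain ⟨s, hs, hd, hsL⟩ := g3
    exact (bigp h.swap23.swap12 hs hd hsL).swap12.swap23
  push Not at g1 g2 g3
  by_cases r1 : L ^ 25 ≤ radN n1
  · exact smallp h (fun r a b => (g1 r a b).le) r1
  by_cases r2 : L ^ 25 ≤ radN n2
  · exact (smallp h.swap12 (fun r a b => (g2 r a b).le) r2).swap12
  by_cases r3 : L ^ 25 ≤ radN n3
  · exact (smallp h.swap23.swap12 (fun r a b => (g3 r a b).le) r3).swap12.swap23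
  exfalso
  push Not at r1 r2 r3
  have := h.hrad
  have h2 : (radN n1 : ℝ) * radN n2 * radN n3 ≤ L ^ 25 * L ^ 25 * L ^ 25 := by gcongr
  have h3 : L ^ 25 * L ^ 25 * L ^ 25 = L ^ 75 := by ring
  have h4 : L ^ 75 < L ^ 80 := pow_lt_pow_right₀ (by linarith) (by norm_num)
  linarith

lemma radN_mul {m n : ℕ} (h : Nat.Coprime m n) : radN (m * n) = radN m * radN n := by
  unfold radN
  rw [h.primeFactors_mul, Finset.prod_union h.disjoint_primeFactors]

lemma ev_large (κ : ℝ) : ∀ᶠ c : ℕ in Filter.atTop,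
    ((Nat.factorial 20 : ℕ) : ℝ) ≤ (c : ℝ) ^ (1/100 : ℝ) ∧ κ ≤ (c : ℝ) ^ (1/100 : ℝ) ∧
    ∀ k : ℕ, (2:ℝ) ^ k ≤ c → (k : ℝ) ≤ (c : ℝ) ^ (1/100 : ℝ) := by
  have t : Filter.Tendsto (fun c : ℕ => (c : ℝ) ^ (1/100 : ℝ)) Filter.atTop Filter.atTop :=
    (tendsto_rpow_atTop (by norm_num)).comp tendsto_natCast_atTop_atTop
  have l := ((isLittleO_log_rpow_atTop (show (0:ℝ) < 1/100 by norm_num)).bound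
    (show (0:ℝ) < 1/2 by norm_num))
  have l' := tendsto_natCast_atTop_atTop (R := ℝ) |>.eventually l
  filter_upwards [t.eventually_ge_atTop _, t.eventually_ge_atTop κ, l'] with c h1 h2 h3
  refine ⟨h1, h2, ?_⟩
  intro k hk
  have h4 : Real.log c ≤ 1/2 * (c : ℝ) ^ (1/100 : ℝ) := by
    rw [Real.norm_eq_abs, Real.norm_of_nonneg (by positivity)] at h3
    exact (le_abs_self _).trans h3
  have h5 : (k : ℝ) * Real.log 2 ≤ Real.log c := by
    rw [← Real.log_pow]
    exact Real.log_le_log (by positivity) hk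
  have h6 := Real.log_two_gt_d9
  have : (0:ℝ) ≤ k := by positivity
  nlinarith

end SDCproof

/-- The Masser–Oesterlé abc Conjecture implies the Small Derivatives Conjecture. -/
theorem sdc_of_masser_oesterle_abc
    (habc : ∀ ε : ℝ, 0 < ε → ∃ κ : ℝ, 0 < κ ∧ ∀ a b c : ℕ, 0 < a → 0 < b → 0 < c →
      Nat.Coprime a b → a + b = c →
      (c : ℝ) < κ * (radN (a * b * c) : ℝ) ^ (1 + ε)) :
    ∃ η : ℝ, 0 < η ∧ η < 1 ∧ SDC η := by
  obtain ⟨κ, hκ, habc⟩ := habc (1/10) (by norm_num)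
  refine ⟨99/100, by norm_num, by norm_num, ?_⟩
  obtain ⟨C0, hC0⟩ := Filter.eventually_atTop.mp (ev_large κ)
  refine ((Finset.range (C0 + 1) ×ˢ (Finset.range (C0 + 1) ×ˢ Finset.range (C0 + 1))).finite_toSet).subset ?_
  rintro ⟨a, b, c⟩ ⟨ha, hb, hsum, hcop, hex, hno⟩
  simp only at ha hb hsum hcop hex hno
  by_cases hc : c ≤ C0
  · simp only [Finset.coe_product, Finset.coe_range, Set.mem_prod, Set.mem_Iio]
    refine ⟨?_, ?_, ?_⟩ <;> omega
  exfalso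
  apply hno
  obtain ⟨l1, l2, l3⟩ := hC0 c (by omega)
  have hcpos : 0 < c := by omega
  obtain ⟨L, hLdef⟩ : ∃ L : ℝ, L = (c : ℝ) ^ (1/100 : ℝ) := ⟨_, rfl⟩
  rw [← hLdef] at l1 l2 l3
  have c0 : (0:ℝ) ≤ c := by positivity
  have hL100 : L ^ 100 = c := by
    rw [hLdef, ← Real.rpow_natCast, ← Real.rpow_mul c0]; norm_num
  have hL99 : (c : ℝ) ^ (99/100 : ℝ) = L ^ 99 := by
    rw [hLdef, ← Real.rpow_natCast, ← Real.rpow_mul c0]; norm_num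
  have hL1000 : 1000 ≤ L := le_trans (by norm_num [Nat.factorial]) l1
  have hac : Nat.Coprime a c := by rw [← hsum]; simpa using hcop
  have hbc : Nat.Coprime b c := by rw [← hsum]; simpa using hcop.symm
  have hrmul : radN (a * b * c) = radN a * radN b * radN c := by
    rw [radN_mul (Nat.Coprime.mul_left hac hbc), radN_mul hcop]
  have hrad : L ^ 80 ≤ (radN a : ℝ) * radN b * radN c := by
    have h1 := habc a b c ha hb hcpos hcop hsum
    rw [hrmul] at h1
    push_cast at h1
    by_contra hcon
    push Not at hcon
    have h2 : ((radN a : ℝ) * radN b * radN c) ^ (1 + 1/10 : ℝ) ≤ (L ^ 80) ^ (1 + 1/10 : ℝ) :=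
      Real.rpow_le_rpow (by positivity) hcon.le (by norm_num)
    have h3 : (L ^ 80) ^ (1 + 1/10 : ℝ) = L ^ 88 := by
      rw [← Real.rpow_natCast, ← Real.rpow_natCast, ← Real.rpow_mul (by linarith)]; norm_num
    rw [h3] at h2
    have h4 : (c : ℝ) < L ^ 100 := by
      calc (c : ℝ) < κ * ((radN a : ℝ) * radN b * radN c) ^ (1 + 1/10 : ℝ) := h1
        _ ≤ κ * L ^ 88 := by gcongr
        _ ≤ L * L ^ 88 := by gcongr
        _ = L ^ 89 := by ring
        _ ≤ L ^ 100 := pow_le_pow_right₀ (by linarith) (by norm_num)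
    linarith
  have H : Hyp 1 1 (-1) a b c L :=
    { p1 := ha, p2 := hb, p3 := hcpos, c12 := hcop, c13 := hac, c23 := hbc
      s1 := by norm_num
      s2 := by norm_num
      s3 := by norm_num
      sum := by rw [← hsum]; push_cast; ring
      b1 := by rw [hL100]; exact_mod_cast (by omega : a ≤ c)
      b2 := by rw [hL100]; exact_mod_cast (by omega : b ≤ c)
      b3 := by rw [hL100]
      big := l1
      hlog := by rw [hL100]; exact l3
      hrad := hrad
      hm := fun N q hq hh => hex ⟨N, q, hq, hh⟩ }
  obtain ⟨ψ, q1, q2, q3, q4, q5⟩ := core H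
  have hadd : dpsi ψ ((a : ℤ) + (b : ℤ)) = dpsi ψ (a : ℤ) + dpsi ψ (b : ℤ) := by
    have : (a : ℤ) + b = c := by exact_mod_cast hsum
    rw [this]; linarith
  refine ⟨ψ, ⟨⟨q1, ⌈L ^ 98⌉, ?_⟩, ?_, hadd⟩, ?_, ?_⟩
  · intro p
    have h1 : ((|ψ p| : ℤ) : ℝ) ≤ ⌈L ^ 98⌉ := by
      push_cast
      exact (q5 p).trans (Int.le_ceil _)
    exact_mod_cast h1
  · intro p hp hnd
    rw [hsum] at hnd
    refine q2 p hp (fun h => hnd ?_) (fun h => hnd ?_) (fun h => hnd ?_)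
    · exact (h.mul_right b).mul_right c
    · exact (h.mul_left a).mul_right c
    · exact h.mul_left _
  · intro hW
    unfold Wpsi at hW
    apply q4
    have hcZ : (c : ℤ) = a + b := by exact_mod_cast hsum.symm
    rw [← hcZ] at hadd
    rw [hadd, hcZ]
    refine ⟨by linarith, by linarith, by linarith⟩
  · show dNorm ψ < (c : ℝ) ^ (99/100 : ℝ)
    rw [hL99]
    have h1 : dNorm ψ ≤ L ^ 98 := ciSup_le q5
    exact h1.trans_lt (pow_lt_pow_right₀ (by linarith) (by norm_num))
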